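/- Let p be a prime, let S ⊆ F_p^2 be a set of seven distinct points, and let q ∈ F_p^2 with q ∉ S. If the eight points S ∪ {q} all lie on a common irreducible cubic curve, then the F_p-vector space of polynomials in F_p[X,Y] of total degree at most 3 that vanish at every point of S ∪ {q} has dimension exactly 2 (as a subspace of the 10-dimensional space of all polynomials of total degree at most 3). Equivalently, the hyperplane of cubic coefficient vectors determined by q does not contain the 2-flat of cubics through S. -/

import Mathlib

/-!
Write `h(d, T)` for the dimension of the space of polynomials of degree at most `d` vanishing on the
finite set `T`.  Since `h(3, ∅) = 10`, eight points give `h(3, T) ≥ 2`; the content is `h(3, T) ≤ 2`.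

The tool is the residual inequality `finrank_vanishing_succ_le`: if exactly `k ≤ d + 2` points of `T`
lie on a line `ℓ`, then `h(d + 1, T) ≤ (d + 2 - k) + h(d, T \ ℓ)`.  It comes from restricting
polynomials to a parametrised `ℓ`.  A restriction has degree at most `d + 1` and `k` known roots, so it
is determined by its coefficients of degrees `k, …, d + 1`, and a polynomial with zero restriction is
divisible by the equation of `ℓ` (`line_dvd_of_restrictLine_eq_zero`).  Working with restrictions as
univariate polynomials, rather than as functions on the points of `ℓ`, makes the argument valid over
small fields, such as `F_3`, whose affine lines have fewer than four points.

A line meets an irreducible cubic `f` in at most three points, so no four of the eight points are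
collinear.  If some three are collinear, the residual inequality gives
`h(3, T) ≤ 1 + h(2, five points) ≤ 2`.  If no three are collinear, then `h(3, seven of the points) ≤ 3`.
Suppose `h(3, T) ≥ 3`.  For two of the points `P, Q`, the residual inequality provides a conic `c ≠ 0`
through the other six.  A cubic through all points but `P` also passes through `P`, because the two
spaces have the same dimension; applying this to `c` times a line through `Q` but not `P` gives
`c(P) = 0`, and likewise `c(Q) = 0`.  Now the multiples of `c` by polynomials of degree at most one form
a three-dimensional subspace of the space of cubics through `T`, hence all of it, so `c ∣ f`,
contradicting irreducibility.
-/

open scoped Classical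

noncomputable section

def zeroSet {p : ℕ} (f : MvPolynomial (Fin 2) (ZMod p)) : Set (Fin 2 → ZMod p) :=
  {x | MvPolynomial.eval x f = 0}

def IsIrredCubic {p : ℕ} (γ : Set (Fin 2 → ZMod p)) : Prop :=
  ∃ f : MvPolynomial (Fin 2) (ZMod p), Irreducible f ∧ f.totalDegree = 3 ∧ γ = zeroSet f

/-- The space of polynomials of total degree at most 3 vanishing at every point of `S`. -/
def vanishingCubics (p : ℕ) (S : Finset (Fin 2 → ZMod p)) :
    Submodule (ZMod p) (MvPolynomial (Fin 2) (ZMod p)) :=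
  MvPolynomial.restrictTotalDegree (Fin 2) (ZMod p) 3 ⊓
    ⨅ q ∈ S, LinearMap.ker (MvPolynomial.aeval (R := ZMod p) q).toLinearMap

open MvPolynomial Module

section Field

variable {F : Type*} [Field F]

/-- The space of polynomials in two variables of total degree at most `d` vanishing on `S`. -/
def vanishing (d : ℕ) (S : Finset (Fin 2 → F)) : Submodule F (MvPolynomial (Fin 2) F) :=
  MvPolynomial.restrictTotalDegree (Fin 2) F d ⊓
    ⨅ q ∈ S, LinearMap.ker (MvPolynomial.aeval (R := F) q).toLinearMap

theorem mem_vanishing {d : ℕ} {S : Finset (Fin 2 → F)} {f : MvPolynomial (Fin 2) F} :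
    f ∈ vanishing d S ↔ f.totalDegree ≤ d ∧ ∀ x ∈ S, eval x f = 0 := by
  simp [vanishing, mem_restrictTotalDegree, Submodule.mem_iInf, aeval_eq_eval]

instance (d : ℕ) (S : Finset (Fin 2 → F)) : FiniteDimensional F (vanishing d S) :=
  Submodule.finiteDimensional_of_le (S₂ := restrictTotalDegree (Fin 2) F d) inf_le_left

/-- Imposing finitely many linear conditions lowers the dimension by at most their number. -/
theorem finrank_le_card_add {ι M : Type*} [Fintype ι] [AddCommGroup M] [Module F M]
    (W W' : Submodule F M) [FiniteDimensional F W] [FiniteDimensional F W']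
    (φ : M →ₗ[F] (ι → F)) (h : ∀ f ∈ W, φ f = 0 → f ∈ W') :
    finrank F W ≤ Fintype.card ι + finrank F W' := by
  have h1 := LinearMap.finrank_range_add_finrank_ker (φ.domRestrict W)
  have h2 : finrank F (LinearMap.range (φ.domRestrict W)) ≤ Fintype.card ι := by
    simpa using Submodule.finrank_le (LinearMap.range (φ.domRestrict W))
  have h3 : finrank F (LinearMap.ker (φ.domRestrict W)) ≤ finrank F W' := by
    let g : LinearMap.ker (φ.domRestrict W) →ₗ[F] W' :=
      LinearMap.codRestrict W' (W.subtype ∘ₗ Submodule.subtype _)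
        (fun x => h _ x.1.2 (LinearMap.mem_ker.mp x.2))
    refine LinearMap.finrank_le_finrank_of_injective (f := g) ?_
    intro x y hxy
    have := congrArg Subtype.val hxy
    exact Subtype.ext (Subtype.ext this)
  omega

/-- The equation of the line through `P` and `Q`. -/
def line (P Q : Fin 2 → F) : MvPolynomial (Fin 2) F :=
  C (Q 1 - P 1) * (X 0 - C (P 0)) - C (Q 0 - P 0) * (X 1 - C (P 1))

theorem eval_line (P Q x : Fin 2 → F) :
    eval x (line P Q) = (Q 1 - P 1) * (x 0 - P 0) - (Q 0 - P 0) * (x 1 - P 1) := by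
  simp [line]

theorem exists_coeffs {P Q : Fin 2 → F} (h : P ≠ Q) :
    ∃ a b : F, a * (Q 0 - P 0) + b * (Q 1 - P 1) = 1 := by
  by_cases h0 : Q 0 - P 0 = 0
  · have h1 : Q 1 - P 1 ≠ 0 := by
      intro h1
      apply h
      ext i
      fin_cases i
      · exact (sub_eq_zero.mp h0).symm
      · exact (sub_eq_zero.mp h1).symm
    exact ⟨0, (Q 1 - P 1)⁻¹, by field_simp; simp⟩
  · exact ⟨(Q 0 - P 0)⁻¹, 0, by field_simp; simp⟩

theorem one_le_totalDegree_of_eval {f : MvPolynomial (Fin 2) F} (hf : f ≠ 0) {x : Fin 2 → F}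
    (hx : eval x f = 0) : 1 ≤ f.totalDegree := by
  by_contra hlt
  have h0 : f.totalDegree = 0 := by omega
  rw [totalDegree_eq_zero_iff_eq_C] at h0
  rw [h0, eval_C] at hx
  rw [hx, C_0] at h0
  exact hf h0

theorem line_ne_zero {P Q : Fin 2 → F} (h : P ≠ Q) : line P Q ≠ 0 := by
  obtain ⟨a, b, hab⟩ := exists_coeffs h
  intro h0
  have := eval_line P Q ![P 0 + b, P 1 - a]
  simp only [h0, map_zero, Matrix.cons_val_zero, Matrix.cons_val_one] at this
  exact one_ne_zero (α := F) (by linear_combination -hab - this)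

theorem one_le_totalDegree_line {P Q : Fin 2 → F} (h : P ≠ Q) : 1 ≤ (line P Q).totalDegree :=
  one_le_totalDegree_of_eval (line_ne_zero h) (x := P) (by simp [eval_line])

theorem totalDegree_X_sub_C_le (i : Fin 2) (a : F) :
    (X i - C a : MvPolynomial (Fin 2) F).totalDegree ≤ 1 := by
  refine (totalDegree_sub _ _).trans ?_
  simp

theorem totalDegree_line_le (P Q : Fin 2 → F) : (line P Q).totalDegree ≤ 1 := by
  refine (totalDegree_sub _ _).trans (max_le ?_ ?_) <;>
  · refine (totalDegree_mul _ _).trans ?_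
    rw [totalDegree_C, zero_add]
    exact totalDegree_X_sub_C_le _ _

/-- Restriction of polynomials to the line through `P` and `Q`, parametrised by
`t ↦ P + t (Q - P)`. -/
def restrictLine (P Q : Fin 2 → F) : MvPolynomial (Fin 2) F →ₐ[F] Polynomial F :=
  aeval (fun i => Polynomial.C (Q i - P i) * Polynomial.X + Polynomial.C (P i))

theorem natDegree_restrictLine_le (P Q : Fin 2 → F) {f : MvPolynomial (Fin 2) F} {d : ℕ}
    (hf : f.totalDegree ≤ d) : (restrictLine P Q f).natDegree ≤ d := by
  have := aeval_natDegree_le f hf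
    (fun i => Polynomial.C (Q i - P i) * Polynomial.X + Polynomial.C (P i)) (n := 1)
    (fun i => Polynomial.natDegree_linear_le)
  simpa [restrictLine] using this

theorem eval_restrictLine (P Q : Fin 2 → F) (f : MvPolynomial (Fin 2) F) (t : F) :
    (restrictLine P Q f).eval t = eval (fun i => (Q i - P i) * t + P i) f := by
  have : (Polynomial.aeval t).comp (restrictLine P Q)
      = aeval (R := F) (fun i => (Q i - P i) * t + P i) := by
    ext i
    simp [restrictLine]
  simpa [aeval_eq_eval, Polynomial.aeval_def] using DFunLike.congr_fun this f

/-- The restriction to a line has kernel generated by the equation of the line: modulo that equation,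
an affine function `s` with `s(P) = 0` and `s(Q) = 1` inverts the parametrisation. -/
theorem line_dvd_of_restrictLine_eq_zero {P Q : Fin 2 → F} (h : P ≠ Q)
    {f : MvPolynomial (Fin 2) F} (hf : restrictLine P Q f = 0) : line P Q ∣ f := by
  obtain ⟨a, b, hab⟩ := exists_coeffs h
  let I : Ideal (MvPolynomial (Fin 2) F) := Ideal.span {line P Q}
  let s : MvPolynomial (Fin 2) F := C a * (X 0 - C (P 0)) + C b * (X 1 - C (P 1))
  have hab' : (C a * (C (Q 0) - C (P 0)) + C b * (C (Q 1) - C (P 1)) : MvPolynomial (Fin 2) F)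
      = 1 := by
    simpa using congrArg (C (σ := Fin 2)) hab
  have key : (Polynomial.aeval (Ideal.Quotient.mkₐ F I s)).comp (restrictLine P Q)
      = Ideal.Quotient.mkₐ F I := by
    apply MvPolynomial.algHom_ext
    intro i
    have h1 : (Polynomial.aeval (Ideal.Quotient.mkₐ F I s)).comp (restrictLine P Q) (X i)
        = Ideal.Quotient.mkₐ F I (C (Q i - P i) * s + C (P i)) := by
      simp only [AlgHom.comp_apply, restrictLine, aeval_X, map_add, map_mul, Polynomial.aeval_C,
        Polynomial.aeval_X]
      simp only [← algebraMap_eq, AlgHom.commutes]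
    rw [h1, Ideal.Quotient.mkₐ_eq_mk, Ideal.Quotient.eq, Ideal.mem_span_singleton]
    fin_cases i
    · refine ⟨-C b, ?_⟩
      simp only [s, line, C_sub, Fin.zero_eta]
      linear_combination (X 0 - C (P 0)) * hab'
    · refine ⟨C a, ?_⟩
      simp only [s, line, C_sub, Fin.mk_one]
      linear_combination (X 1 - C (P 1)) * hab'
  have h2 := DFunLike.congr_fun key f
  rw [AlgHom.comp_apply, hf, map_zero, Ideal.Quotient.mkₐ_eq_mk, eq_comm,
    Ideal.Quotient.eq_zero_iff_mem, Ideal.mem_span_singleton] at h2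
  exact h2

/-- The points of `T` on the line through `P` and `Q`. -/
def onLine (T : Finset (Fin 2 → F)) (P Q : Fin 2 → F) : Finset (Fin 2 → F) :=
  T.filter (fun x => eval x (line P Q) = 0)

/-- The points of `T` off the line through `P` and `Q`. -/
def offLine (T : Finset (Fin 2 → F)) (P Q : Fin 2 → F) : Finset (Fin 2 → F) :=
  T.filter (fun x => ¬ eval x (line P Q) = 0)

theorem card_onLine_add_card_offLine (T : Finset (Fin 2 → F)) (P Q : Fin 2 → F) :
    (onLine T P Q).card + (offLine T P Q).card = T.card :=
  Finset.card_filter_add_card_filter_not _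

theorem pair_subset_onLine {T : Finset (Fin 2 → F)} {P Q : Fin 2 → F} (hP : P ∈ T) (hQ : Q ∈ T) :
    {P, Q} ⊆ onLine T P Q := by
  intro x hx
  simp only [Finset.mem_insert, Finset.mem_singleton] at hx
  rcases hx with rfl | rfl
  · simp [onLine, hP, eval_line]
  · simp [onLine, hQ, eval_line, mul_comm]

theorem two_le_card_onLine {T : Finset (Fin 2 → F)} {P Q : Fin 2 → F} (hP : P ∈ T) (hQ : Q ∈ T)
    (h : P ≠ Q) : 2 ≤ (onLine T P Q).card :=
  (Finset.card_pair h).ge.trans (Finset.card_le_card (pair_subset_onLine hP hQ))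

theorem card_onLine_mono {T T' : Finset (Fin 2 → F)} (h : T' ⊆ T) (P Q : Fin 2 → F) :
    (onLine T' P Q).card ≤ (onLine T P Q).card :=
  Finset.card_le_card (Finset.filter_subset_filter _ h)

theorem offLine_subset (T : Finset (Fin 2 → F)) (P Q : Fin 2 → F) : offLine T P Q ⊆ T :=
  Finset.filter_subset _ _

theorem restrictLine_eq_zero_of_natDegree_lt {P Q : Fin 2 → F} (h : P ≠ Q)
    {T : Finset (Fin 2 → F)} {f : MvPolynomial (Fin 2) F} (hf : ∀ x ∈ T, eval x f = 0)
    (hd : (restrictLine P Q f).natDegree < (onLine T P Q).card) : restrictLine P Q f = 0 := by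
  obtain ⟨a, b, hab⟩ := exists_coeffs h
  -- The parameter of a point `x` of the line.
  let τ : (Fin 2 → F) → F := fun x => a * (x 0 - P 0) + b * (x 1 - P 1)
  have hτ : ∀ x ∈ onLine T P Q, (fun i => (Q i - P i) * τ x + P i) = x := by
    intro x hx
    have hx2 := (Finset.mem_filter.mp hx).2
    rw [eval_line] at hx2
    ext i
    fin_cases i
    · simp only [τ, Fin.zero_eta]
      linear_combination (x 0 - P 0) * hab - b * hx2
    · simp only [τ, Fin.mk_one]
      linear_combination (x 1 - P 1) * hab + a * hx2
  refine Polynomial.eq_zero_of_natDegree_lt_card_of_eval_eq_zero (restrictLine P Q f)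
    (ι := onLine T P Q) (f := fun x => τ x.1) ?_ ?_ (by simpa using hd)
  · intro x y hxy
    apply Subtype.ext
    rw [← hτ x.1 x.2, ← hτ y.1 y.2]
    simp only at hxy
    rw [hxy]
  · intro x
    rw [eval_restrictLine, hτ x.1 x.2]
    exact hf _ (Finset.mem_filter.mp x.2).1

/-- The residual inequality `h(d + 1, T) ≤ (d + 2 - k) + h(d, T \ ℓ)`, where `k ≤ d + 2` is the number
of points of `T` on the line `ℓ` through `P` and `Q`; the degree `d + 1` is passed as a separate variable
`e`. -/
theorem finrank_vanishing_succ_le {P Q : Fin 2 → F} (h : P ≠ Q) (T : Finset (Fin 2 → F)) (d e : ℕ)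
    (he : e = d + 1) (hk : (onLine T P Q).card ≤ d + 2) :
    finrank F (vanishing e T) + (onLine T P Q).card
      ≤ d + 2 + finrank F (vanishing d (offLine T P Q)) := by
  subst he
  let k := (onLine T P Q).card
  let φ : MvPolynomial (Fin 2) F →ₗ[F] (Fin (d + 2 - k) → F) :=
    LinearMap.pi fun i => Polynomial.lcoeff F (k + i) ∘ₗ (restrictLine P Q).toLinearMap
  let μ : MvPolynomial (Fin 2) F →ₗ[F] MvPolynomial (Fin 2) F := LinearMap.mulLeft F (line P Q)
  have h1 := finrank_le_card_add (vanishing (d + 1) T)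
    ((vanishing d (offLine T P Q)).map μ) φ (by
      intro f hf hφ
      rw [mem_vanishing] at hf
      have hdeg := natDegree_restrictLine_le P Q hf.1
      have h0 : restrictLine P Q f = 0 := by
        by_contra hne
        have hlt : (restrictLine P Q f).natDegree < k := by
          by_contra hge
          have := congrFun hφ ⟨(restrictLine P Q f).natDegree - k, by omega⟩
          simp only [φ, LinearMap.pi_apply, LinearMap.comp_apply, AlgHom.toLinearMap_apply,
            Polynomial.lcoeff_apply, Pi.zero_apply] at this
          rw [Nat.add_sub_cancel' (by omega), Polynomial.coeff_natDegree,
            Polynomial.leadingCoeff_eq_zero] at this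
          exact hne this
        exact hne (restrictLine_eq_zero_of_natDegree_lt h hf.2 hlt)
      obtain ⟨g, rfl⟩ := line_dvd_of_restrictLine_eq_zero h h0
      refine ⟨g, mem_vanishing.mpr ⟨?_, ?_⟩, by simp [μ]⟩
      · by_cases hg : g = 0
        · simp [hg]
        · have := totalDegree_mul_of_isDomain (line_ne_zero h) hg
          have := one_le_totalDegree_line h
          omega
      · intro x hx
        obtain ⟨hxT, hx0⟩ := Finset.mem_filter.mp hx
        have := hf.2 x hxT
        rw [map_mul] at this
        exact (mul_eq_zero.mp this).resolve_left hx0)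
  have h2 := Submodule.finrank_map_le μ (vanishing d (offLine T P Q))
  simp only [Fintype.card_fin] at h1
  omega

theorem finrank_vanishing_zero_le (T : Finset (Fin 2 → F)) : finrank F (vanishing 0 T) ≤ 1 := by
  have := finrank_le_card_add (ι := Fin 1) (vanishing 0 T) ⊥
    (LinearMap.pi fun _ => lcoeff F 0) (by
      intro f hf h0
      have h1 := (mem_vanishing.mp hf).1
      rw [nonpos_iff_eq_zero, totalDegree_eq_zero_iff_eq_C] at h1
      have h2 : coeff 0 f = 0 := congrFun h0 0
      rw [h1, h2]
      simp)
  simpa using this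

theorem finrank_vanishing_zero_eq {T : Finset (Fin 2 → F)} (hT : T.card = 1) :
    finrank F (vanishing 0 T) = 0 := by
  have : vanishing 0 T = ⊥ := by
    rw [eq_bot_iff]
    intro f hf
    obtain ⟨x, rfl⟩ := Finset.card_eq_one.mp hT
    obtain ⟨h1, h2⟩ := mem_vanishing.mp hf
    by_contra hne
    have := one_le_totalDegree_of_eval (x := x) hne (h2 x (by simp))
    omega
  rw [this, finrank_bot]

theorem finrank_vanishing_one_two_le {T : Finset (Fin 2 → F)} (hT : T.card = 2) :
    finrank F (vanishing 1 T) ≤ 1 := by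
  obtain ⟨P, hP, Q, hQ, hne⟩ := Finset.one_lt_card.mp (by omega : 1 < T.card)
  have h1 := two_le_card_onLine hP hQ hne
  have h2 := card_onLine_add_card_offLine T P Q
  have h3 := finrank_vanishing_succ_le hne T 0 1 rfl (by omega)
  have h4 := finrank_vanishing_zero_le (offLine T P Q)
  omega

theorem finrank_vanishing_one_three_eq {T : Finset (Fin 2 → F)} (hT : T.card = 3)
    (hl : ∀ P ∈ T, ∀ Q ∈ T, P ≠ Q → (onLine T P Q).card ≤ 2) :
    finrank F (vanishing 1 T) = 0 := by
  obtain ⟨P, hP, Q, hQ, hne⟩ := Finset.one_lt_card.mp (by omega : 1 < T.card)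
  have h1 := two_le_card_onLine hP hQ hne
  have h2 := card_onLine_add_card_offLine T P Q
  have h5 := hl P hP Q hQ hne
  have h3 := finrank_vanishing_succ_le hne T 0 1 rfl (by omega)
  have h4 := finrank_vanishing_zero_eq (T := offLine T P Q) (by omega)
  omega

/-- At most one conic passes through five points no four of which are collinear. -/
theorem finrank_vanishing_two_five_le {T : Finset (Fin 2 → F)} (hT : T.card = 5)
    (hl : ∀ P ∈ T, ∀ Q ∈ T, P ≠ Q → (onLine T P Q).card ≤ 3) :
    finrank F (vanishing 2 T) ≤ 1 := by
  by_cases hc : ∃ P ∈ T, ∃ Q ∈ T, P ≠ Q ∧ (onLine T P Q).card = 3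
  · obtain ⟨P, hP, Q, hQ, hne, h1⟩ := hc
    have h2 := card_onLine_add_card_offLine T P Q
    have h3 := finrank_vanishing_succ_le hne T 1 2 rfl (by omega)
    have h4 := finrank_vanishing_one_two_le (T := offLine T P Q) (by omega)
    omega
  · push Not at hc
    have hl2 : ∀ P ∈ T, ∀ Q ∈ T, P ≠ Q → (onLine T P Q).card ≤ 2 := by
      intro P hP Q hQ hne
      have := hl P hP Q hQ hne
      have := hc P hP Q hQ hne
      omega
    obtain ⟨P, hP, Q, hQ, hne⟩ := Finset.one_lt_card.mp (by omega : 1 < T.card)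
    have h1 := two_le_card_onLine hP hQ hne
    have h2 := card_onLine_add_card_offLine T P Q
    have h5 := hl2 P hP Q hQ hne
    have h3 := finrank_vanishing_succ_le hne T 1 2 rfl (by omega)
    have hsub := offLine_subset T P Q
    have h4 := finrank_vanishing_one_three_eq (T := offLine T P Q) (by omega)
      (fun A hA B hB hAB => (card_onLine_mono hsub A B).trans (hl2 A (hsub hA) B (hsub hB) hAB))
    omega

theorem finrank_vanishing_three_seven_le {T : Finset (Fin 2 → F)} (hT : T.card = 7)
    (hl : ∀ P ∈ T, ∀ Q ∈ T, P ≠ Q → (onLine T P Q).card ≤ 2) :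
    finrank F (vanishing 3 T) ≤ 3 := by
  obtain ⟨P, hP, Q, hQ, hne⟩ := Finset.one_lt_card.mp (by omega : 1 < T.card)
  have h1 := two_le_card_onLine hP hQ hne
  have h2 := card_onLine_add_card_offLine T P Q
  have h5 := hl P hP Q hQ hne
  have h3 := finrank_vanishing_succ_le hne T 2 3 rfl (by omega)
  have hsub := offLine_subset T P Q
  have h4 := finrank_vanishing_two_five_le (T := offLine T P Q) (by omega)
    (fun A hA B hB hAB => (card_onLine_mono hsub A B).trans
      ((hl A (hsub hA) B (hsub hB) hAB).trans (by omega)))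
  omega

theorem card_le_finrank_vanishing_empty (d : ℕ) :
    Fintype.card {x : Fin (d + 1) × Fin (d + 1) // x.1.val + x.2.val ≤ d}
      ≤ finrank F (vanishing d (∅ : Finset (Fin 2 → F))) := by
  let e : {x : Fin (d + 1) × Fin (d + 1) // x.1.val + x.2.val ≤ d} → (Fin 2 →₀ ℕ) :=
    fun x => Finsupp.equivFunOnFinite.symm ![x.1.1.val, x.1.2.val]
  have he : Function.Injective e := by
    intro x y hxy
    have h := Finsupp.equivFunOnFinite.symm.injective hxy
    have h0 := congrFun h 0
    have h1 := congrFun h 1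
    simp only [Matrix.cons_val_zero, Matrix.cons_val_one] at h0 h1
    exact Subtype.ext (Prod.ext (Fin.ext h0) (Fin.ext h1))
  have hli : LinearIndependent F (fun x => basisMonomials (Fin 2) F (e x)) :=
    (basisMonomials (Fin 2) F).linearIndependent.comp e he
  let v : {x : Fin (d + 1) × Fin (d + 1) // x.1.val + x.2.val ≤ d} →
      vanishing d (∅ : Finset (Fin 2 → F)) :=
    fun x => ⟨basisMonomials (Fin 2) F (e x), mem_vanishing.mpr ⟨by
      rw [coe_basisMonomials, totalDegree_monomial _ one_ne_zero]
      rw [Finsupp.sum_fintype _ _ (by simp)]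
      simpa [e] using x.2, by simp⟩⟩
  have hv : LinearIndependent F v :=
    LinearIndependent.of_comp (vanishing d (∅ : Finset (Fin 2 → F))).subtype hli
  exact hv.fintype_card_le_finrank

theorem ten_le_finrank_add_card (T : Finset (Fin 2 → F)) :
    10 ≤ T.card + finrank F (vanishing 3 T) := by
  have h1 := card_le_finrank_vanishing_empty (F := F) 3
  have hc : Fintype.card {x : Fin (3 + 1) × Fin (3 + 1) // x.1.val + x.2.val ≤ 3} = 10 := by
    rw [Fintype.card_subtype]; decide
  have h2 := finrank_le_card_add (ι := T) (vanishing 3 (∅ : Finset (Fin 2 → F))) (vanishing 3 T)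
    (LinearMap.pi fun x => (aeval (R := F) x.1).toLinearMap) (by
      intro f hf h0
      refine mem_vanishing.mpr ⟨(mem_vanishing.mp hf).1, fun x hx => ?_⟩
      simpa [aeval_eq_eval] using congrFun h0 ⟨x, hx⟩)
  rw [Fintype.card_coe] at h2
  omega

theorem three_le_finrank_vanishing_one :
    3 ≤ finrank F (vanishing 1 (∅ : Finset (Fin 2 → F))) := by
  have h1 := card_le_finrank_vanishing_empty (F := F) 1
  have hc : Fintype.card {x : Fin (1 + 1) × Fin (1 + 1) // x.1.val + x.2.val ≤ 1} = 3 := by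
    rw [Fintype.card_subtype]; decide
  omega

/-- An irreducible cubic has no factor of degree one or two. -/
theorem eq_mul_false {f g k : MvPolynomial (Fin 2) F} (hf : Irreducible f)
    (hd : f.totalDegree = 3) (h : f = g * k) (hg : g.totalDegree ≤ 2) (hg1 : 1 ≤ g.totalDegree) :
    False := by
  have hle := totalDegree_mul g k
  rcases hf.isUnit_or_isUnit h with hu | hu
  · have := (isUnit_iff_totalDegree_of_isReduced.mp hu).2
    omega
  · have := (isUnit_iff_totalDegree_of_isReduced.mp hu).2
    rw [← h] at hle
    omega

theorem card_onLine_le_three {f : MvPolynomial (Fin 2) F} (hf : Irreducible f)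
    (hd : f.totalDegree = 3) {T : Finset (Fin 2 → F)} (hT : ∀ x ∈ T, eval x f = 0)
    {P Q : Fin 2 → F} (h : P ≠ Q) : (onLine T P Q).card ≤ 3 := by
  by_contra hlt
  have h1 := natDegree_restrictLine_le P Q hd.le
  have h0 := restrictLine_eq_zero_of_natDegree_lt h hT (by omega)
  obtain ⟨g, hg⟩ := line_dvd_of_restrictLine_eq_zero h h0
  exact eq_mul_false hf hd hg ((totalDegree_line_le P Q).trans (by omega))
    (one_le_totalDegree_line h)

/-- If every cubic through `T \ {P}` passes through `P`, then a conic through all points of `T` other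
than `P` and `Q` passes through `P`: multiply it by a line through `Q` but not `P`. -/
theorem eval_conic_eq_zero {T : Finset (Fin 2 → F)} {P Q : Fin 2 → F} (hP : P ∈ T) (h : P ≠ Q)
    (hV : vanishing 3 (T.erase P) ≤ vanishing 3 T) {c : MvPolynomial (Fin 2) F}
    (hc : c.totalDegree ≤ 2) (hc0 : ∀ x ∈ T, x ≠ P → x ≠ Q → eval x c = 0) : eval P c = 0 := by
  obtain ⟨i, hi⟩ := Function.ne_iff.mp h
  have hmem : c * (X i - C (Q i)) ∈ vanishing 3 (T.erase P) := by
    refine mem_vanishing.mpr ⟨?_, ?_⟩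
    · have h1 := totalDegree_mul c (X i - C (Q i))
      have h2 := totalDegree_X_sub_C_le i (Q i)
      omega
    · intro x hx
      obtain ⟨hxP, hxT⟩ := Finset.mem_erase.mp hx
      by_cases hxQ : x = Q
      · simp [hxQ]
      · simp [hc0 x hxT hxP hxQ]
  have := (mem_vanishing.mp (hV hmem)).2 P hP
  simp only [map_mul, map_sub, eval_X, eval_C] at this
  exact (mul_eq_zero.mp this).resolve_right (sub_ne_zero.mpr hi)

theorem finrank_vanishing_three_eight_le {f : MvPolynomial (Fin 2) F} (hf : Irreducible f)
    (hd : f.totalDegree = 3) {T : Finset (Fin 2 → F)} (hT : ∀ x ∈ T, eval x f = 0)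
    (hcard : T.card = 8) : finrank F (vanishing 3 T) ≤ 2 := by
  have hl : ∀ P ∈ T, ∀ Q ∈ T, P ≠ Q → (onLine T P Q).card ≤ 3 :=
    fun P _ Q _ hne => card_onLine_le_three hf hd hT hne
  by_cases hc : ∃ P ∈ T, ∃ Q ∈ T, P ≠ Q ∧ (onLine T P Q).card = 3
  · obtain ⟨P, hP, Q, hQ, hne, h1⟩ := hc
    have h2 := card_onLine_add_card_offLine T P Q
    have h3 := finrank_vanishing_succ_le hne T 2 3 rfl (by omega)
    have hsub := offLine_subset T P Q
    have h4 := finrank_vanishing_two_five_le (T := offLine T P Q) (by omega)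
      (fun A hA B hB hAB => (card_onLine_mono hsub A B).trans (hl A (hsub hA) B (hsub hB) hAB))
    omega
  push Not at hc
  have hl2 : ∀ P ∈ T, ∀ Q ∈ T, P ≠ Q → (onLine T P Q).card ≤ 2 := by
    intro P hP Q hQ hne
    have := hl P hP Q hQ hne
    have := hc P hP Q hQ hne
    omega
  by_contra hgt
  have hle : ∀ P ∈ T, vanishing 3 T ≤ vanishing 3 (T.erase P) := fun P _ g hg =>
    mem_vanishing.mpr ⟨(mem_vanishing.mp hg).1,
      fun x hx => (mem_vanishing.mp hg).2 x (Finset.mem_of_mem_erase hx)⟩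
  have h7 : ∀ P ∈ T, finrank F (vanishing 3 (T.erase P)) ≤ 3 := by
    intro P hP
    have hsub := Finset.erase_subset P T
    refine finrank_vanishing_three_seven_le (by rw [Finset.card_erase_of_mem hP, hcard])
      (fun A hA B hB hAB => (card_onLine_mono hsub A B).trans (hl2 A (hsub hA) B (hsub hB) hAB))
  have hV : ∀ P ∈ T, vanishing 3 (T.erase P) ≤ vanishing 3 T := fun P hP =>
    (Submodule.eq_of_le_of_finrank_le (hle P hP) ((h7 P hP).trans (by omega))).ge
  obtain ⟨P, hP, Q, hQ, hne⟩ := Finset.one_lt_card.mp (by omega : 1 < T.card)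
  have h2 := two_le_card_onLine hP hQ hne
  have h5 := hl2 P hP Q hQ hne
  have h3 := finrank_vanishing_succ_le hne T 2 3 rfl (by omega)
  have hbot : vanishing 2 (offLine T P Q) ≠ ⊥ := by
    intro hb
    rw [hb, finrank_bot] at h3
    omega
  obtain ⟨c, hcV, hc0⟩ := Submodule.exists_mem_ne_zero_of_ne_bot hbot
  obtain ⟨hcd, hcz⟩ := mem_vanishing.mp hcV
  -- The line through `P` and `Q` contains no other point of `T`.
  have hon : onLine T P Q = {P, Q} := by
    refine (Finset.eq_of_subset_of_card_le (pair_subset_onLine hP hQ) ?_).symm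
    rw [Finset.card_pair hne]
    exact h5
  have hcz' : ∀ x ∈ T, x ≠ P → x ≠ Q → eval x c = 0 := by
    intro x hx hxP hxQ
    refine hcz x (Finset.mem_filter.mpr ⟨hx, fun h0 => ?_⟩)
    have : x ∈ onLine T P Q := Finset.mem_filter.mpr ⟨hx, h0⟩
    rw [hon] at this
    simp [hxP, hxQ] at this
  have hcP := eval_conic_eq_zero hP hne (hV P hP) hcd hcz'
  have hcQ := eval_conic_eq_zero hQ hne.symm (hV Q hQ) hcd
    (fun x hx hxQ hxP => hcz' x hx hxP hxQ)
  have hcT : ∀ x ∈ T, eval x c = 0 := by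
    intro x hx
    by_cases hxP : x = P
    · rw [hxP, hcP]
    by_cases hxQ : x = Q
    · rw [hxQ, hcQ]
    exact hcz' x hx hxP hxQ
  let μ : MvPolynomial (Fin 2) F →ₗ[F] MvPolynomial (Fin 2) F := LinearMap.mulLeft F c
  have hμ : Function.Injective μ := fun a b hab => mul_left_cancel₀ hc0 hab
  have hmap : (vanishing 1 (∅ : Finset (Fin 2 → F))).map μ ≤ vanishing 3 T := by
    rintro _ ⟨g, hg, rfl⟩
    refine mem_vanishing.mpr ⟨?_, fun x hx => ?_⟩
    · have h1 := totalDegree_mul c g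
      have h2 := (mem_vanishing.mp hg).1
      simp only [μ, LinearMap.mulLeft_apply]
      omega
    · simp [μ, hcT x hx]
  have heq := Submodule.eq_of_le_of_finrank_le hmap (by
    rw [← (Submodule.equivMapOfInjective μ hμ _).finrank_eq]
    exact ((Submodule.finrank_mono (hle P hP)).trans (h7 P hP)).trans
      three_le_finrank_vanishing_one)
  have hfV : f ∈ vanishing 3 T := mem_vanishing.mpr ⟨hd.le, hT⟩
  rw [← heq] at hfV
  obtain ⟨g, _, hg⟩ := hfV
  exact eq_mul_false hf hd hg.symm hcd (one_le_totalDegree_of_eval hc0 hcP)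

end Field

theorem vanishing_space_of_eight_on_irreducible_cubic
    (p : ℕ) [Fact p.Prime] (S : Finset (Fin 2 → ZMod p)) (hS : S.card = 7)
    (q : Fin 2 → ZMod p) (hq : q ∉ S)
    (h : ∃ γ : Set (Fin 2 → ZMod p), IsIrredCubic γ ∧ q ∈ γ ∧ ∀ x ∈ S, x ∈ γ) :
    Module.finrank (ZMod p) (vanishingCubics p (insert q S)) = 2 := by
  obtain ⟨_, ⟨f, hf, hd, rfl⟩, hqf, hSf⟩ := h
  have hcard : (insert q S).card = 8 := by rw [Finset.card_insert_of_notMem hq, hS]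
  have hle := finrank_vanishing_three_eight_le hf hd (T := insert q S)
    (by
      intro x hx
      rcases Finset.mem_insert.mp hx with rfl | hx
      · exact hqf
      · exact hSf x hx) hcard
  have hge := ten_le_finrank_add_card (insert q S)
  have heq : vanishingCubics p (insert q S) = vanishing 3 (insert q S) := rfl
  rw [heq]
  omega
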